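/- Let n, r, s, t be natural numbers with n = r + 2s + 3t and r ≤ n. Then there exist nonzero rational constants C₁, C₂, C₃ depending only on n and r such that, in U(𝔤), modulo the left ideal U(𝔤)𝔫₊: (i) (E₂₁ⁿF₂₁^{2n})_L(a^r b^s c^t) ≡ C₁ · (H₂₁−n+1)(H₂₁−n+2)⋯(H₂₁−n+r) · (E₂₁^{n−r}F₂₁^{2(n−r)})_L(b^s c^t); (ii) (E₁₀ⁿF₃₁ⁿ)_L(a^r b^s c^t) ≡ C₂ · (H₁₀−n+1)⋯(H₁₀−n+r) · (E₁₀^{n−r}F₃₁^{n−r})_L(b^s c^t); (iii) (E₁₁ⁿF₃₂ⁿ)_L(a^r b^s c^t) ≡ C₃ · (H₁₁−n+1)⋯(H₁₁−n+r) · (E₁₁^{n−r}F₃₂^{n−r})_L(b^s c^t). (The paper gives C₁ = (−1)^r (n!/(n−r)!)((2n)!/(2n−2r)!) and C₂ = C₃ = (n!/(n−r)!)².) -/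

import Mathlib

/-- The canonical embedding of a Lie algebra into its universal enveloping algebra. -/
noncomputable def ιU {L : Type*} [LieRing L] [LieAlgebra ℂ L] (x : L) :
    UniversalEnvelopingAlgebra ℂ L :=
  UniversalEnvelopingAlgebra.ι ℂ x

/-- The adjoint action `X_L : f ↦ Xf − fX` of `X ∈ L` on `U(L)`. -/
noncomputable def adU {L : Type*} [LieRing L] [LieAlgebra ℂ L] (x : L)
    (f : UniversalEnvelopingAlgebra ℂ L) : UniversalEnvelopingAlgebra ℂ L :=
  ιU x * f - f * ιU x

/-- A Lie algebra over `ℂ` equipped with Chevalley generators of type `G₂`: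
`E₁₀, F₁₀, H₁₀` correspond to the short simple root `α` and `E₀₁, F₀₁, H₀₁` to the long
simple root `β`, subject to the Chevalley relations and the Serre relations, and the
generators generate the Lie algebra.  (By Serre's theorem such a Lie algebra is a quotient of
the simple Lie algebra of type `G₂`.) -/
structure G2Gens (L : Type*) [LieRing L] [LieAlgebra ℂ L] where
  E10 : L
  E01 : L
  F10 : L
  F01 : L
  H10 : L
  H01 : L
  hH10H01 : ⁅H10, H01⁆ = 0
  hE10F10 : ⁅E10, F10⁆ = H10
  hE01F01 : ⁅E01, F01⁆ = H01
  hE10F01 : ⁅E10, F01⁆ = 0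
  hE01F10 : ⁅E01, F10⁆ = 0
  hH10E10 : ⁅H10, E10⁆ = (2 : ℂ) • E10
  hH01E01 : ⁅H01, E01⁆ = (2 : ℂ) • E01
  hH10E01 : ⁅H10, E01⁆ = (-3 : ℂ) • E01
  hH01E10 : ⁅H01, E10⁆ = (-1 : ℂ) • E10
  hH10F10 : ⁅H10, F10⁆ = (-2 : ℂ) • F10
  hH01F01 : ⁅H01, F01⁆ = (-2 : ℂ) • F01
  hH10F01 : ⁅H10, F01⁆ = (3 : ℂ) • F01
  hH01F10 : ⁅H01, F10⁆ = (1 : ℂ) • F10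
  serreE1 : ⁅E10, ⁅E10, ⁅E10, ⁅E10, E01⁆⁆⁆⁆ = 0
  serreE2 : ⁅E01, ⁅E01, E10⁆⁆ = 0
  serreF1 : ⁅F10, ⁅F10, ⁅F10, ⁅F10, F01⁆⁆⁆⁆ = 0
  serreF2 : ⁅F01, ⁅F01, F10⁆⁆ = 0
  generates : LieSubalgebra.lieSpan ℂ L {E10, E01, F10, F01, H10, H01} = ⊤

namespace G2Gens

variable {L : Type*} [LieRing L] [LieAlgebra ℂ L] (g : G2Gens L)

/-- The root vector `E₁₁ = [E₁₀, E₀₁]`. -/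
def E11 : L := ⁅g.E10, g.E01⁆
/-- The root vector `E₂₁ = (1/2)[E₁₁, E₁₀]`. -/
noncomputable def E21 : L := (2 : ℂ)⁻¹ • ⁅g.E11, g.E10⁆
/-- The root vector `E₃₁ = (1/3)[E₂₁, E₁₀]`. -/
noncomputable def E31 : L := (3 : ℂ)⁻¹ • ⁅g.E21, g.E10⁆
/-- The root vector `E₃₂ = [E₃₁, E₀₁]`. -/
noncomputable def E32 : L := ⁅g.E31, g.E01⁆
/-- The root vector `F₁₁ = [F₀₁, F₁₀]`. -/
def F11 : L := ⁅g.F01, g.F10⁆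
/-- The root vector `F₂₁ = (1/2)[F₁₀, F₁₁]`. -/
noncomputable def F21 : L := (2 : ℂ)⁻¹ • ⁅g.F10, g.F11⁆
/-- The root vector `F₃₁ = (1/3)[F₁₀, F₂₁]`. -/
noncomputable def F31 : L := (3 : ℂ)⁻¹ • ⁅g.F10, g.F21⁆
/-- The root vector `F₃₂ = [F₀₁, F₃₁]`. -/
noncomputable def F32 : L := ⁅g.F01, g.F31⁆
/-- The coroot `H₁₁ = H₁₀ + 3H₀₁`. -/
def H11 : L := g.H10 + (3 : ℂ) • g.H01
/-- The coroot `H₂₁ = 2H₁₀ + 3H₀₁`. -/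
def H21 : L := (2 : ℂ) • g.H10 + (3 : ℂ) • g.H01
/-- The coroot `H₃₁ = H₁₀ + H₀₁`. -/
def H31 : L := g.H10 + g.H01
/-- The coroot `H₃₂ = H₁₀ + 2H₀₁`. -/
def H32 : L := g.H10 + (2 : ℂ) • g.H01

/-- The element `a = E₂₁` of `U(𝔤)`. -/
noncomputable def aU : UniversalEnvelopingAlgebra ℂ L := ιU g.E21
/-- The element `b = E₃₁E₁₁ − E₃₂E₁₀` of `U(𝔤)`. -/
noncomputable def bU : UniversalEnvelopingAlgebra ℂ L :=
  ιU g.E31 * ιU g.E11 - ιU g.E32 * ιU g.E10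
/-- The element `c = E₃₁²E₀₁ − E₃₂E₃₁H₀₁ − E₃₂²F₀₁` of `U(𝔤)`. -/
noncomputable def cU : UniversalEnvelopingAlgebra ℂ L :=
  ιU g.E31 * ιU g.E31 * ιU g.E01 - ιU g.E32 * ιU g.E31 * ιU g.H01
    - ιU g.E32 * ιU g.E32 * ιU g.F01
/-- The element `u = (1/3)a² − b` of `U(𝔤)`. -/
noncomputable def uU : UniversalEnvelopingAlgebra ℂ L :=
  (3 : ℂ)⁻¹ • (g.aU * g.aU) - g.bU
/-- The element `v = (2/9)a³ − ab − 3c` of `U(𝔤)`. -/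
noncomputable def vU : UniversalEnvelopingAlgebra ℂ L :=
  ((2 : ℂ) / 9) • (g.aU * g.aU * g.aU) - g.aU * g.bU - (3 : ℂ) • g.cU

/-- `f ≡ h (mod U(𝔤)𝔫₊)`:  `f − h` lies in the left ideal of `U(𝔤)` generated by `E₁₀`
and `E₀₁`. -/
def EqModN (f h : UniversalEnvelopingAlgebra ℂ L) : Prop :=
  ∃ A B : UniversalEnvelopingAlgebra ℂ L, f - h = A * ιU g.E10 + B * ιU g.E01

end G2Gens


/-!
Each of the three operators is `(ad e)ⁿ (ad φ)ᵖⁿ`, where `φ` is a negative root vector whose divided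
power `(ad φ)ᵖ / p!` maps `a` to a multiple of a root vector `f` killed by `ad φ`, and `e, h, f` is
an `sl₂`-triple with `e ∈ 𝔫₊`. The operator `ad φ` is nilpotent of order at most `2p + 1` on `b` and
`3p + 1` on `c`: leading terms cancel in `b` for `φ = F₂₁` and in `c` for `φ = F₃₁, F₃₂`. As
`n = r + 2s + 3t`, only one term of the Leibniz expansion of `(ad φ)ᵖⁿ (aʳ y)` with `y = bˢ cᵗ`
survives, namely a multiple of `fʳ (ad φ)ᵖᵐ y`, where `m = n - r`.

Modulo the left ideal `U(𝔤)𝔫₊` the operator `ad e` is left multiplication by `e`, and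
`(ad e)ᵐ⁺¹ (ad φ)ᵖᵐ y` vanishes there: it is an eigenvector of positive weight, whereas
`U(𝔤) = U(𝔟₋) + U(𝔤)𝔫₊` has only nonpositive weights modulo `U(𝔤)𝔫₊`. The commutation formula for
`eⁿ fʳ` in `sl₂` then turns `fʳ` into the product of shifts of `h`.
-/

section Derivation

open Finset Module.End
open scoped Nat

variable {R A : Type*} [CommRing R] [Ring A] [Algebra R A] {D : Module.End R A}

/-- The Leibniz rule for an endomorphism of a noncommutative algebra. (Mathlib's `Derivation` is
restricted to commutative algebras.) -/
def IsDerivation (D : Module.End R A) : Prop :=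
  ∀ x y, D (x * y) = D x * y + x * D y

/-- `HasTop D k x t` says that the divided power `D ^ k / k!` maps `x` to `t` and that `D` kills
`t`. To avoid division the first condition is encoded as `D ^ k x = k! • t`. The value `t = 0` is
allowed, so `k` is only an upper bound for the order of nilpotency of `D` on `x`. -/
structure HasTop (D : Module.End R A) (k : ℕ) (x t : A) : Prop where
  pow_apply : (D ^ k) x = k ! • t
  apply_top : D t = 0

namespace HasTop

variable {k : ℕ} {x y t u : A}

theorem of_apply_eq_zero (h : D x = 0) : HasTop D 0 x x := ⟨by simp, h⟩

theorem pow_succ_apply (h : HasTop D k x t) : (D ^ (k + 1)) x = 0 := by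
  rw [pow_succ', mul_apply, h.pow_apply, map_nsmul, h.apply_top, smul_zero]

theorem succ (h : HasTop D k x t) : HasTop D (k + 1) x 0 :=
  ⟨by rw [h.pow_succ_apply, smul_zero], map_zero D⟩

theorem pow_apply_eq_zero (h : HasTop D k x 0) : (D ^ k) x = 0 := by
  rw [h.pow_apply, smul_zero]

theorem sub (hx : HasTop D k x t) (hy : HasTop D k y u) : HasTop D k (x - y) (t - u) :=
  ⟨by rw [map_sub, hx.pow_apply, hy.pow_apply, smul_sub],
    by rw [map_sub, hx.apply_top, hy.apply_top, sub_zero]⟩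

end HasTop

namespace IsDerivation

variable {k l : ℕ} {κ μ : R} {x y : A}

theorem map_one (hD : IsDerivation D) : D 1 = 0 := by
  simpa using hD 1 1

theorem pow_apply_mul (hD : IsDerivation D) (n : ℕ) (x y : A) :
    (D ^ n) (x * y) =
      ∑ ij ∈ antidiagonal n, n.choose ij.1 • ((D ^ ij.1) x * (D ^ ij.2) y) := by
  induction n with
  | zero => simp
  | succ n ih =>
    rw [sum_antidiagonal_choose_succ_nsmul (fun i j => (D ^ i) x * (D ^ j) y) n]
    simp only [pow_succ', mul_apply, ih, map_sum, map_nsmul, hD _ _, nsmul_add, sum_add_distrib]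
    rw [add_comm, add_left_cancel_iff, sum_congr rfl]
    rintro ⟨i, j⟩ hij
    rw [HasAntidiagonal.mem_antidiagonal] at hij
    rw [Nat.choose_symm_of_eq_add hij.symm]

theorem pow_add_apply_mul (hD : IsDerivation D) (hx : (D ^ (k + 1)) x = 0)
    (hy : (D ^ (l + 1)) y = 0) :
    (D ^ (k + l)) (x * y) = (k + l).choose k • ((D ^ k) x * (D ^ l) y) := by
  rw [hD.pow_apply_mul]
  refine sum_eq_single_of_mem (k, l) (by simp) fun ⟨i, j⟩ hij hne => ?_
  rw [HasAntidiagonal.mem_antidiagonal] at hij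
  rcases lt_or_ge k i with hi | hi
  · rw [pow_map_zero_of_le hi hx, zero_mul, smul_zero]
  · have hj : l < j := by grind
    rw [pow_map_zero_of_le hj hy, mul_zero, smul_zero]

theorem pow_add_succ_apply_mul (hD : IsDerivation D) (hx : (D ^ (k + 1)) x = 0)
    (hy : (D ^ (l + 1)) y = 0) : (D ^ (k + l + 1)) (x * y) = 0 := by
  have hy' : (D ^ (l + 1 + 1)) y = 0 := pow_map_zero_of_le (l + 1).le_succ hy
  rw [add_assoc, hD.pow_add_apply_mul hx hy', hy, mul_zero, smul_zero]

theorem pow_mul_succ_apply_pow (hD : IsDerivation D) (hx : (D ^ (k + 1)) x = 0) (n : ℕ) :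
    (D ^ (k * n + 1)) (x ^ n) = 0 := by
  induction n with
  | zero => simpa using hD.map_one
  | succ n ih => rw [pow_succ x n]; exact hD.pow_add_succ_apply_mul ih hx

theorem mul_mem_eigenspace (hD : IsDerivation D) (hx : x ∈ eigenspace D κ)
    (hy : y ∈ eigenspace D μ) : x * y ∈ eigenspace D (κ + μ) := by
  rw [mem_eigenspace_iff] at *
  rw [hD, hx, hy, smul_mul_assoc, mul_smul_comm, add_smul]

theorem one_mem_eigenspace (hD : IsDerivation D) : (1 : A) ∈ eigenspace D (0 : R) := by
  rw [mem_eigenspace_iff, hD.map_one, zero_smul]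

theorem pow_mem_eigenspace (hD : IsDerivation D) (hx : x ∈ eigenspace D κ) (n : ℕ) :
    x ^ n ∈ eigenspace D (n * κ) := by
  induction n with
  | zero => simpa using hD.one_mem_eigenspace
  | succ n ih =>
    rw [pow_succ, Nat.cast_succ, add_one_mul]
    exact hD.mul_mem_eigenspace ih hx

theorem adjoin_le_iSup_eigenspace (hD : IsDerivation D) {S : Set A} {M : AddSubmonoid R}
    (hS : ∀ s ∈ S, ∃ μ ∈ M, s ∈ eigenspace D μ) :
    Subalgebra.toSubmodule (Algebra.adjoin R S) ≤ ⨆ μ ∈ M, eigenspace D μ := by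
  have hmonomial : ∀ x ∈ Submonoid.closure S, ∃ μ ∈ M, x ∈ eigenspace D μ := by
    intro x hx
    induction hx using Submonoid.closure_induction with
    | mem s hs => exact hS s hs
    | one => exact ⟨0, M.zero_mem, hD.one_mem_eigenspace⟩
    | mul x y _ _ hx hy =>
      obtain ⟨μ, hμ, hx⟩ := hx
      obtain ⟨ν, hν, hy⟩ := hy
      exact ⟨μ + ν, M.add_mem hμ hν, hD.mul_mem_eigenspace hx hy⟩
  rw [Algebra.adjoin_eq_span, Submodule.span_le]
  intro x hx
  obtain ⟨μ, hμ, hx⟩ := hmonomial x hx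
  exact Submodule.mem_iSup_of_mem μ (Submodule.mem_iSup_of_mem hμ hx)

theorem span_le_comap (hD : IsDerivation D) {T : Set A} (hT : ∀ t ∈ T, D t ∈ Ideal.span T) :
    (Ideal.span T).restrictScalars R ≤ ((Ideal.span T).restrictScalars R).comap D := by
  intro x hx
  induction hx using Submodule.span_induction with
  | mem t ht => exact hT t ht
  | zero => exact Submodule.zero_mem _
  | add x y _ _ hx hy => exact Submodule.add_mem _ hx hy
  | smul a x hx hDx =>
    rw [Submodule.mem_comap, smul_eq_mul, hD]
    exact add_mem (Ideal.mul_mem_left _ _ hx) (Ideal.mul_mem_left _ _ hDx)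

end IsDerivation

namespace HasTop

variable {k l : ℕ} {x y t u : A}

theorem mul (hD : IsDerivation D) (hx : HasTop D k x t) (hy : HasTop D l y u) :
    HasTop D (k + l) (x * y) (t * u) := by
  refine ⟨?_, by rw [hD, hx.apply_top, hy.apply_top, zero_mul, mul_zero, add_zero]⟩
  rw [hD.pow_add_apply_mul hx.pow_succ_apply hy.pow_succ_apply, hx.pow_apply, hy.pow_apply,
    smul_mul_smul_comm, smul_smul, ← mul_assoc, Nat.choose_symm_add,
    Nat.add_choose_mul_factorial_mul_factorial]

theorem pow (hD : IsDerivation D) (hx : HasTop D k x t) (n : ℕ) :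
    HasTop D (k * n) (x ^ n) (t ^ n) := by
  induction n with
  | zero => simpa using of_apply_eq_zero hD.map_one
  | succ n ih => rw [_root_.pow_succ x, _root_.pow_succ t, mul_add_one]; exact ih.mul hD hx

theorem pow_add_apply_mul (hD : IsDerivation D) (hx : HasTop D k x t)
    (hy : (D ^ (l + 1)) y = 0) :
    (D ^ (k + l)) (x * y) = (k + l).descFactorial k • (t * (D ^ l) y) := by
  rw [hD.pow_add_apply_mul hx.pow_succ_apply hy, hx.pow_apply, smul_mul_assoc, smul_smul,
    Nat.descFactorial_eq_factorial_mul_choose, mul_comm]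

end HasTop

end Derivation

section TriangularDecomposition

open Module.End

/-- Modulo `N`, the eigenvector `x` is a sum of eigenvectors for eigenvalues other than its own. -/
theorem mem_of_mem_eigenspace_of_mem_iSup_sup {K V : Type*} [Field K] [AddCommGroup V]
    [Module K V] {D : Module.End K V} {N : Submodule K V} (hN : N ≤ N.comap D) {M : Set K} {k : K}
    (hk : k ∉ M) {x : V} (hx : x ∈ eigenspace D k) (hxN : x ∈ (⨆ μ ∈ M, eigenspace D μ) ⊔ N) :
    x ∈ N := by
  let D' := N.mapQ N D hN
  have map_le (μ : K) : (eigenspace D μ).map N.mkQ ≤ eigenspace D' μ := by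
    rw [Submodule.map_le_iff_le_comap]
    intro y hy
    rw [mem_eigenspace_iff] at hy
    simp [D', hy]
  have hmem : N.mkQ x ∈ ⨆ μ ∈ M, eigenspace D' μ := by
    have := Submodule.mem_map_of_mem (f := N.mkQ) hxN
    simp only [Submodule.map_sup, Submodule.map_iSup, Submodule.mkQ_map_self, sup_bot_eq] at this
    exact iSup₂_mono (fun μ _ => map_le μ) this
  have hdisj : Disjoint (eigenspace D' k) (⨆ μ ∈ M, eigenspace D' μ) :=
    (eigenspaces_iSupIndep D').disjoint_biSup hk
  rw [← N.ker_mkQ, LinearMap.mem_ker]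
  exact Submodule.disjoint_def.1 hdisj _ (map_le k (Submodule.mem_map_of_mem hx)) hmem

variable {R A : Type*} [CommRing R] [Ring A] [Algebra R A] {S T : Set A}

theorem exists_mul_eq_add_mul_of_mem_adjoin {e x : A}
    (hexchange : ∀ s ∈ S, ∃ b ∈ Algebra.adjoin R S, ∃ b' ∈ Algebra.adjoin R S, e * s = b + b' * e)
    (hx : x ∈ Algebra.adjoin R S) :
    ∃ b ∈ Algebra.adjoin R S, ∃ b' ∈ Algebra.adjoin R S, e * x = b + b' * e := by
  induction hx using Algebra.adjoin_induction with
  | mem s hs => exact hexchange s hs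
  | algebraMap r =>
    exact ⟨0, zero_mem _, _, Subalgebra.algebraMap_mem _ r, by rw [zero_add, Algebra.commutes]⟩
  | add x y _ _ hx hy =>
    obtain ⟨b, hb, b', hb', hx⟩ := hx
    obtain ⟨c, hc, c', hc', hy⟩ := hy
    exact ⟨b + c, add_mem hb hc, b' + c', add_mem hb' hc', by rw [mul_add, hx, hy]; noncomm_ring⟩
  | mul x y _ hyS hx hy =>
    obtain ⟨b, hb, b', hb', hx⟩ := hx
    obtain ⟨c, hc, c', hc', hy⟩ := hy
    refine ⟨b * y + b' * c, add_mem (mul_mem hb hyS) (mul_mem hb' hc),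
      b' * c', mul_mem hb' hc', ?_⟩
    rw [← mul_assoc, hx, add_mul, mul_assoc, hy]
    noncomm_ring

theorem adjoin_sup_span_eq_top (hST : Algebra.adjoin R (S ∪ T) = ⊤)
    (hexchange : ∀ e ∈ T, ∀ s ∈ S, ∃ b ∈ Algebra.adjoin R S, ∃ b' ∈ Algebra.adjoin R S,
      e * s = b + b' * e) :
    Subalgebra.toSubmodule (Algebra.adjoin R S) ⊔ (Ideal.span T).restrictScalars R = ⊤ := by
  set P := Subalgebra.toSubmodule (Algebra.adjoin R S) ⊔ (Ideal.span T).restrictScalars R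
  have hmulP : ∀ a, ∀ p ∈ P, a * p ∈ P := by
    intro a
    induction (hST ▸ Algebra.mem_top : a ∈ Algebra.adjoin R (S ∪ T)) using
      Algebra.adjoin_induction with
    | mem a ha =>
      intro p hp
      obtain ⟨b, hb, i, hi, rfl⟩ := Submodule.mem_sup.1 hp
      rw [mul_add]
      refine add_mem ?_ (Submodule.mem_sup_right (Ideal.mul_mem_left _ a hi))
      rcases ha with hs | he
      · exact Submodule.mem_sup_left (Subalgebra.mul_mem _ (Algebra.subset_adjoin hs) hb)
      · obtain ⟨c, hc, c', -, hcc'⟩ := exists_mul_eq_add_mul_of_mem_adjoin (hexchange a he) hb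
        rw [hcc']
        exact Submodule.add_mem_sup hc (Ideal.mul_mem_left _ c' (Ideal.subset_span he))
    | algebraMap r =>
      intro p hp
      rw [← Algebra.smul_def]
      exact P.smul_mem r hp
    | add a b _ _ ha hb => intro p hp; rw [add_mul]; exact add_mem (ha p hp) (hb p hp)
    | mul a b _ _ ha hb => intro p hp; rw [mul_assoc]; exact ha _ (hb p hp)
  refine eq_top_iff.2 fun a _ => ?_
  rw [← mul_one a]
  exact hmulP a 1 (Submodule.mem_sup_left (Subalgebra.one_mem _))

end TriangularDecomposition

section SlTwo

open Polynomial

theorem aeval_ascPochhammer_eq_prod_range {A : Type*} [Ring A] (x : A) (r : ℕ) :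
    aeval x (ascPochhammer ℕ r) = ((List.range r).map fun j : ℕ => x + j).prod := by
  induction r with
  | zero => simp
  | succ r ih => simp [ascPochhammer_succ_right, List.range_succ, ih]

variable {A M : Type*} [Ring A] [AddCommGroup M] [Module A M] {e f h : A}

theorem pow_succ_mul_eq_add_of_sl2 (hef : e * f - f * e = h) (hhe : h * e - e * h = 2 * e) (n : ℕ) :
    e ^ (n + 1) * f = f * e ^ (n + 1) + (n + 1) • ((h - n) * e ^ n) := by
  have hef' : e * f = f * e + h := by rw [← hef]; abel
  have heh : e * h = h * e - 2 * e := by rw [← hhe]; abel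
  induction n with
  | zero => simp [hef']
  | succ n ih =>
    have hen : e * (h - n) = (h - n - 2) * e := by
      rw [mul_sub, heh, ← (Nat.cast_commute n e).eq]; noncomm_ring
    rw [pow_succ' _ (n + 1), mul_assoc, ih, mul_add, ← mul_assoc, hef', mul_smul_comm, ← mul_assoc,
      hen, mul_assoc _ e, ← pow_succ', add_mul, mul_assoc f, ← pow_succ']
    simp only [sub_mul, two_mul, Nat.cast_succ, add_mul, one_mul, ← nsmul_eq_mul]
    module

theorem pow_succ_smul_smul_of_sl2 (hef : e * f - f * e = h) (hhe : h * e - e * h = 2 * e) {n : ℕ}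
    {w : M} (hw : e ^ (n + 1) • w = 0) :
    e ^ (n + 1) • f • w = (n + 1) • (h - n) • e ^ n • w := by
  rw [← mul_smul, pow_succ_mul_eq_add_of_sl2 hef hhe, add_smul, mul_smul, hw, smul_zero, zero_add,
    smul_assoc, mul_smul]

theorem pow_smul_pow_smul_eq_zero_of_sl2 (hef : e * f - f * e = h) (hhe : h * e - e * h = 2 * e)
    {m : ℕ} {v : M} (hv : e ^ (m + 1) • v = 0) (r : ℕ) : e ^ (r + m + 1) • f ^ r • v = 0 := by
  induction r with
  | zero => simpa using hv
  | succ r ih =>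
    have ih' : e ^ (r + m + 1 + 1) • f ^ r • v = 0 := by rw [pow_succ', mul_smul, ih, smul_zero]
    rw [pow_succ' f, mul_smul, Nat.add_right_comm r 1 m, pow_succ_smul_smul_of_sl2 hef hhe ih', ih,
      smul_zero, smul_zero]

theorem pow_smul_pow_smul_of_sl2 (hef : e * f - f * e = h) (hhe : h * e - e * h = 2 * e)
    {m : ℕ} {v : M} (hv : e ^ (m + 1) • v = 0) (r : ℕ) :
    e ^ (r + m) • f ^ r • v = (r + m).descFactorial r •
      aeval (h - (r + m : ℕ) + 1) (ascPochhammer ℕ r) • e ^ m • v := by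
  induction r with
  | zero => simp
  | succ r ih =>
    have hasc : aeval (h - (r + m + 1 : ℕ) + 1) (ascPochhammer ℕ (r + 1)) =
        (h - (r + m : ℕ)) * aeval (h - (r + m : ℕ) + 1) (ascPochhammer ℕ r) := by
      rw [Nat.cast_succ, sub_add_eq_sub_sub, sub_add_cancel, ascPochhammer_succ_left,
        map_mul, aeval_X, aeval_comp]
      simp
    rw [pow_succ' f, mul_smul, Nat.add_right_comm r 1 m, hasc,
      pow_succ_smul_smul_of_sl2 hef hhe (pow_smul_pow_smul_eq_zero_of_sl2 hef hhe hv r), ih,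
      Nat.succ_descFactorial_succ, smul_comm _ (Nat.descFactorial _ _), mul_smul, mul_smul]

end SlTwo

section EnvelopingAlgebra

open Module.End
open Polynomial (aeval)

variable {L : Type*} [LieRing L] [LieAlgebra ℂ L]

theorem ιU_add (x y : L) : ιU (x + y) = ιU x + ιU y :=
  map_add (UniversalEnvelopingAlgebra.ι ℂ) x y

theorem ιU_smul (c : ℂ) (x : L) : ιU (c • x) = c • ιU x :=
  map_smul (UniversalEnvelopingAlgebra.ι ℂ) c x

theorem ιU_neg (x : L) : ιU (-x) = -ιU x := map_neg (UniversalEnvelopingAlgebra.ι ℂ) x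

theorem ιU_zero : ιU (0 : L) = 0 := map_zero (UniversalEnvelopingAlgebra.ι ℂ)

attribute [local instance] LieRing.ofAssociativeRing in
theorem ιU_lie (x y : L) : ιU ⁅x, y⁆ = ιU x * ιU y - ιU y * ιU x :=
  LieHom.map_lie (UniversalEnvelopingAlgebra.ι ℂ) x y

theorem adjoin_range_ιU :
    Algebra.adjoin ℂ (Set.range (ιU : L → UniversalEnvelopingAlgebra ℂ L)) = ⊤ := by
  have hrange : Set.range (ιU : L → UniversalEnvelopingAlgebra ℂ L) =
      UniversalEnvelopingAlgebra.mkAlgHom ℂ L '' Set.range (TensorAlgebra.ι ℂ) :=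
    Set.range_comp (UniversalEnvelopingAlgebra.mkAlgHom ℂ L) (TensorAlgebra.ι ℂ)
  have hsurj : Function.Surjective (UniversalEnvelopingAlgebra.mkAlgHom ℂ L) := Quot.exists_rep
  rw [hrange, ← AlgHom.map_adjoin, TensorAlgebra.adjoin_range_ι, Algebra.map_top,
    (AlgHom.range_eq_top _).2 hsurj]

theorem adjoin_image_ιU_eq_top {s : Set L} (hs : LieSubalgebra.lieSpan ℂ L s = ⊤) :
    Algebra.adjoin ℂ (ιU '' s) = ⊤ := by
  rw [eq_top_iff, ← adjoin_range_ιU, Algebra.adjoin_le_iff]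
  rintro _ ⟨x, rfl⟩
  induction (hs ▸ LieSubalgebra.mem_top x : x ∈ LieSubalgebra.lieSpan ℂ L s) using
    LieSubalgebra.lieSpan_induction with
  | mem x hx => exact Algebra.subset_adjoin ⟨x, hx, rfl⟩
  | zero => rw [ιU_zero]; exact zero_mem _
  | add x y _ _ hx hy => rw [ιU_add]; exact add_mem hx hy
  | smul c x _ hx => rw [ιU_smul]; exact Subalgebra.smul_mem _ hx c
  | lie x y _ _ hx hy => rw [ιU_lie]; exact sub_mem (mul_mem hx hy) (mul_mem hy hx)

/-- The operator `adU x` as a linear endomorphism of the enveloping algebra. -/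
noncomputable def adEnd (x : L) : Module.End ℂ (UniversalEnvelopingAlgebra ℂ L) :=
  LinearMap.mulLeft ℂ (ιU x) - LinearMap.mulRight ℂ (ιU x)

theorem adEnd_apply (x : L) (u : UniversalEnvelopingAlgebra ℂ L) :
    adEnd x u = ιU x * u - u * ιU x := rfl

theorem iterate_adU (x : L) (n : ℕ) (u : UniversalEnvelopingAlgebra ℂ L) :
    (adU x)^[n] u = (adEnd x ^ n) u :=
  (Module.End.pow_apply (adEnd x) n u).symm

theorem isDerivation_adEnd (x : L) : IsDerivation (adEnd x) := fun u v => by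
  simp only [adEnd_apply]; noncomm_ring

theorem adEnd_ιU (x y : L) : adEnd x (ιU y) = ιU ⁅x, y⁆ := (ιU_lie x y).symm

theorem adEnd_pow_ιU (x y : L) (n : ℕ) :
    (adEnd x ^ n) (ιU y) = ιU ((fun z => ⁅x, z⁆)^[n] y) := by
  induction n with
  | zero => rfl
  | succ n ih => rw [pow_succ', mul_apply, ih, adEnd_ιU, Function.iterate_succ_apply']

theorem hasTop_adEnd_ιU {x y z : L} {n : ℕ} (h : (fun z => ⁅x, z⁆)^[n] y = n.factorial • z)
    (hz : ⁅x, z⁆ = 0) : HasTop (adEnd x) n (ιU y) (ιU z) where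
  pow_apply := by
    rw [adEnd_pow_ιU, h]
    exact map_nsmul (UniversalEnvelopingAlgebra.ι ℂ) _ z
  apply_top := by rw [adEnd_ιU, hz, ιU_zero]

section Weights

variable {h x : L} {k l : ℂ} {u : UniversalEnvelopingAlgebra ℂ L}

theorem ιU_mem_eigenspace (hx : ⁅h, x⁆ = k • x) : ιU x ∈ eigenspace (adEnd h) k := by
  rw [mem_eigenspace_iff, adEnd_ιU, hx, ιU_smul]

theorem adEnd_pow_mem_eigenspace (hx : ⁅h, x⁆ = k • x) (hu : u ∈ eigenspace (adEnd h) l) (n : ℕ) :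
    (adEnd x ^ n) u ∈ eigenspace (adEnd h) (n * k + l) := by
  induction n with
  | zero => simpa using hu
  | succ n ih =>
    have hx' := ιU_mem_eigenspace hx
    have hD := isDerivation_adEnd h
    have hright := hD.mul_mem_eigenspace ih hx'
    rw [add_comm] at hright
    have hmem := sub_mem (hD.mul_mem_eigenspace hx' ih) hright
    rw [pow_succ', mul_apply, Nat.cast_succ, add_one_mul, add_right_comm, add_comm _ k]
    simpa only [adEnd_apply, add_assoc] using hmem

end Weights

section LeftIdeal

variable {I : Ideal (UniversalEnvelopingAlgebra ℂ L)} {e f h : L}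

theorem mkQ_mul (a u : UniversalEnvelopingAlgebra ℂ L) :
    Submodule.mkQ I (a * u) = a • Submodule.mkQ I u :=
  map_smul (Submodule.mkQ I) a u

theorem mkQ_adEnd_pow (he : ιU e ∈ I) (n : ℕ) (u : UniversalEnvelopingAlgebra ℂ L) :
    Submodule.mkQ I ((adEnd e ^ n) u) = ιU e ^ n • Submodule.mkQ I u := by
  induction n with
  | zero => simp
  | succ n ih =>
    have hright : Submodule.mkQ I ((adEnd e ^ n) u * ιU e) = 0 := by
      rw [← LinearMap.mem_ker, Submodule.ker_mkQ I]; exact I.mul_mem_left _ he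
    rw [pow_succ', mul_apply, adEnd_apply, map_sub, hright, sub_zero, mkQ_mul, ih, pow_succ',
      mul_smul]

/-- Applying `(ad φ) ^ (p * (r + m))` to `x ^ r * y` moves the top `(q • f) ^ r` to the left of
that of `y`; modulo `I`, `ad e` is left multiplication by `e`, so the powers of `f` are absorbed by
the `sl₂`-relations. -/
theorem adEnd_pow_adEnd_pow_sub_mem (hef : ⁅e, f⁆ = h) (hhe : ⁅h, e⁆ = (2 : ℂ) • e)
    (he : ιU e ∈ I) {φ : L} {p m : ℕ} {q : ℂ} {x y : UniversalEnvelopingAlgebra ℂ L}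
    (hx : HasTop (adEnd φ) p x (ιU (q • f))) (hy : (adEnd φ ^ (p * m + 1)) y = 0)
    (hey : (adEnd e ^ (m + 1)) ((adEnd φ ^ (p * m)) y) ∈ I) (r : ℕ) :
    (adEnd e ^ (r + m)) ((adEnd φ ^ (p * (r + m))) (x ^ r * y)) -
      (q ^ r * (p * (r + m)).descFactorial (p * r) * (r + m).descFactorial r) •
        (aeval (ιU h - (r + m : ℕ) + 1) (ascPochhammer ℕ r) *
          (adEnd e ^ m) ((adEnd φ ^ (p * m)) y)) ∈ I := by
  set v := (adEnd φ ^ (p * m)) y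
  have hef' : ιU e * ιU f - ιU f * ιU e = ιU h := by rw [← ιU_lie, hef]
  have hhe' : ιU h * ιU e - ιU e * ιU h = 2 * ιU e := by
    rw [← ιU_lie, hhe, ιU_smul, two_smul, two_mul]
  have hv : ιU e ^ (m + 1) • Submodule.mkQ I v = 0 := by
    rwa [← mkQ_adEnd_pow he, ← LinearMap.mem_ker, Submodule.ker_mkQ I]
  have hφ : (adEnd φ ^ (p * (r + m))) (x ^ r * y) =
      (q ^ r * (p * (r + m)).descFactorial (p * r)) • (ιU f ^ r * v) := by
    rw [mul_add, (hx.pow (isDerivation_adEnd φ) r).pow_add_apply_mul (isDerivation_adEnd φ) hy,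
      ιU_smul, smul_pow, smul_mul_assoc, ← Nat.cast_smul_eq_nsmul ℂ, smul_smul, mul_comm]
  rw [← Submodule.ker_mkQ I, LinearMap.mem_ker, map_sub, sub_eq_zero, hφ, map_smul (adEnd e ^ _),
    LinearMap.map_smul_of_tower, LinearMap.map_smul_of_tower, mkQ_adEnd_pow he, mkQ_mul, mkQ_mul,
    mkQ_adEnd_pow he, pow_smul_pow_smul_of_sl2 hef' hhe' hv, ← Nat.cast_smul_eq_nsmul ℂ, smul_smul]

end LeftIdeal

end EnvelopingAlgebra

namespace G2Gens

open Module.End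
open Polynomial (aeval)

variable {L : Type*} [LieRing L] [LieAlgebra ℂ L] (g : G2Gens L)

section Roots

/-- `x` has weight `i α + j β` for the action of the Cartan subalgebra spanned by `H₁₀, H₀₁`. -/
structure HasRoot (i j : ℂ) (x : L) : Prop where
  lie_H10 : ⁅g.H10, x⁆ = (2 * i - 3 * j) • x
  lie_H01 : ⁅g.H01, x⁆ = (-i + 2 * j) • x

/-- The element of the Cartan subalgebra acting on each root space by the height of the root. -/
noncomputable def ht : L := (3 : ℂ) • g.H10 + (5 : ℂ) • g.H01

namespace HasRoot

variable {g} {i j k l : ℂ} {x y : L}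

theorem lie (hx : g.HasRoot i j x) (hy : g.HasRoot k l y) : g.HasRoot (i + k) (j + l) ⁅x, y⁆ where
  lie_H10 := by rw [leibniz_lie, hx.lie_H10, hy.lie_H10, smul_lie, lie_smul]; module
  lie_H01 := by rw [leibniz_lie, hx.lie_H01, hy.lie_H01, smul_lie, lie_smul]; module

theorem smul (hx : g.HasRoot i j x) (c : ℂ) : g.HasRoot i j (c • x) where
  lie_H10 := by rw [lie_smul, hx.lie_H10, smul_comm]
  lie_H01 := by rw [lie_smul, hx.lie_H01, smul_comm]

theorem lie_H10_right (hx : g.HasRoot i j x) : ⁅x, g.H10⁆ = (-2 * i + 3 * j) • x := by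
  rw [← lie_skew, hx.lie_H10]; module

theorem lie_H01_right (hx : g.HasRoot i j x) : ⁅x, g.H01⁆ = (i - 2 * j) • x := by
  rw [← lie_skew, hx.lie_H01]; module

theorem lie_H11 (hx : g.HasRoot i j x) : ⁅g.H11, x⁆ = (-i + 3 * j) • x := by
  rw [H11, add_lie, smul_lie, hx.lie_H10, hx.lie_H01]; module

theorem lie_H21 (hx : g.HasRoot i j x) : ⁅g.H21, x⁆ = i • x := by
  rw [H21, add_lie, smul_lie, smul_lie, hx.lie_H10, hx.lie_H01]; module

theorem lie_ht (hx : g.HasRoot i j x) : ⁅g.ht, x⁆ = (i + j) • x := by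
  rw [ht, add_lie, smul_lie, smul_lie, hx.lie_H10, hx.lie_H01]; module

end HasRoot

theorem hasRoot_E10 : g.HasRoot 1 0 g.E10 :=
  ⟨by rw [g.hH10E10]; module, by rw [g.hH01E10]; module⟩

theorem hasRoot_E01 : g.HasRoot 0 1 g.E01 :=
  ⟨by rw [g.hH10E01]; module, by rw [g.hH01E01]; module⟩

theorem hasRoot_E11 : g.HasRoot 1 1 g.E11 := by
  rw [E11]
  convert g.hasRoot_E10.lie g.hasRoot_E01 using 1 <;> norm_num

theorem hasRoot_E21 : g.HasRoot 2 1 g.E21 := by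
  rw [E21]
  convert (g.hasRoot_E11.lie g.hasRoot_E10).smul 2⁻¹ using 1 <;> norm_num

theorem hasRoot_E31 : g.HasRoot 3 1 g.E31 := by
  rw [E31]
  convert (g.hasRoot_E21.lie g.hasRoot_E10).smul 3⁻¹ using 1 <;> norm_num

theorem hasRoot_E32 : g.HasRoot 3 2 g.E32 := by
  rw [E32]
  convert g.hasRoot_E31.lie g.hasRoot_E01 using 1 <;> norm_num

theorem hasRoot_F10 : g.HasRoot (-1) 0 g.F10 :=
  ⟨by rw [g.hH10F10]; module, by rw [g.hH01F10]; module⟩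

theorem hasRoot_F01 : g.HasRoot 0 (-1) g.F01 :=
  ⟨by rw [g.hH10F01]; module, by rw [g.hH01F01]; module⟩

theorem hasRoot_F11 : g.HasRoot (-1) (-1) g.F11 := by
  rw [F11]
  convert g.hasRoot_F01.lie g.hasRoot_F10 using 1 <;> norm_num

theorem hasRoot_F21 : g.HasRoot (-2) (-1) g.F21 := by
  rw [F21]
  convert (g.hasRoot_F10.lie g.hasRoot_F11).smul 2⁻¹ using 1 <;> norm_num

theorem hasRoot_F31 : g.HasRoot (-3) (-1) g.F31 := by
  rw [F31]
  convert (g.hasRoot_F10.lie g.hasRoot_F21).smul 3⁻¹ using 1 <;> norm_num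

theorem hasRoot_F32 : g.HasRoot (-3) (-2) g.F32 := by
  rw [F32]
  convert g.hasRoot_F01.lie g.hasRoot_F31 using 1 <;> norm_num

theorem hasRoot_H10 : g.HasRoot 0 0 g.H10 :=
  ⟨by simp, by rw [← lie_skew, g.hH10H01]; simp⟩

theorem hasRoot_H01 : g.HasRoot 0 0 g.H01 := ⟨by rw [g.hH10H01]; simp, by simp⟩

end Roots

section Brackets

theorem lie_E01_E11 : ⁅g.E01, g.E11⁆ = 0 := by
  rw [E11, ← lie_skew g.E10, lie_neg, g.serreE2, neg_zero]

theorem lie_E01_E21 : ⁅g.E01, g.E21⁆ = 0 := by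
  rw [E21, lie_smul, leibniz_lie, lie_E01_E11, ← lie_skew g.E01 g.E10, ← E11]; simp

theorem lie_F10_F01 : ⁅g.F10, g.F01⁆ = -g.F11 := by rw [F11, lie_skew]

theorem lie_F10_F11 : ⁅g.F10, g.F11⁆ = (2 : ℂ) • g.F21 := by rw [F21]; module

theorem lie_F10_F21 : ⁅g.F10, g.F21⁆ = (3 : ℂ) • g.F31 := by rw [F31]; module

theorem lie_F10_F31 : ⁅g.F10, g.F31⁆ = 0 := by
  have h := g.serreF1
  rw [lie_F10_F01, lie_neg, lie_F10_F11, lie_neg, lie_smul, lie_F10_F21, lie_neg, lie_smul,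
    lie_smul, neg_eq_zero] at h
  simpa using h

theorem lie_F01_F11 : ⁅g.F01, g.F11⁆ = 0 := g.serreF2

theorem lie_F01_F21 : ⁅g.F01, g.F21⁆ = 0 := by
  rw [F21, lie_smul, leibniz_lie, lie_F01_F11, ← F11]; simp

theorem lie_F11_F21 : ⁅g.F11, g.F21⁆ = (3 : ℂ) • g.F32 := by
  rw [F32, F31, lie_smul, leibniz_lie, lie_F01_F21, ← F11]; simp

theorem lie_F01_F32 : ⁅g.F01, g.F32⁆ = 0 := by
  have h : (3 : ℂ) • ⁅g.F01, g.F32⁆ = 0 := by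
    rw [← lie_smul, ← lie_F11_F21, leibniz_lie, lie_F01_F21, lie_F01_F11]; simp
  simpa using h

theorem lie_F10_F32 : ⁅g.F10, g.F32⁆ = 0 := by
  have h : ⁅g.F10, g.F32⁆ = -⁅g.F11, g.F31⁆ := by
    rw [F32, leibniz_lie, lie_F10_F31, lie_F10_F01]; simp
  have h' : (3 : ℂ) • ⁅g.F10, g.F32⁆ = (-3 : ℂ) • ⁅g.F10, g.F32⁆ := by
    rw [← lie_smul, ← lie_F11_F21, leibniz_lie, lie_F10_F21, lie_F10_F11, h, smul_lie, lie_self,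
      lie_smul]
    module
  have h6 : (6 : ℂ) • ⁅g.F10, g.F32⁆ = 0 := by
    rw [← sub_eq_zero] at h'; rw [← h']; module
  simpa using h6

theorem lie_F10_E10 : ⁅g.F10, g.E10⁆ = -g.H10 := by rw [← lie_skew, g.hE10F10]

theorem lie_F10_E01 : ⁅g.F10, g.E01⁆ = 0 := by rw [← lie_skew, g.hE01F10, neg_zero]

theorem lie_F10_E11 : ⁅g.F10, g.E11⁆ = (3 : ℂ) • g.E01 := by
  rw [E11, leibniz_lie, lie_F10_E10, lie_F10_E01, neg_lie, g.hH10E01, lie_zero]; module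

theorem lie_F10_E21 : ⁅g.F10, g.E21⁆ = (-2 : ℂ) • g.E11 := by
  rw [E21, lie_smul, leibniz_lie, lie_F10_E11, lie_F10_E10, smul_lie, ← lie_skew g.E01, ← E11,
    lie_neg, g.hasRoot_E11.lie_H10_right]
  module

theorem lie_F10_E31 : ⁅g.F10, g.E31⁆ = -g.E21 := by
  have h : ⁅g.E11, g.E10⁆ = (2 : ℂ) • g.E21 := by rw [E21]; module
  rw [E31, lie_smul, leibniz_lie, lie_F10_E21, lie_F10_E10, smul_lie, h, lie_neg,
    g.hasRoot_E21.lie_H10_right]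
  module

theorem lie_F10_E32 : ⁅g.F10, g.E32⁆ = 0 := by
  rw [E32, leibniz_lie, lie_F10_E31, lie_F10_E01, neg_lie, ← lie_skew g.E21, lie_E01_E21]; simp

theorem lie_F01_E10 : ⁅g.F01, g.E10⁆ = 0 := by rw [← lie_skew, g.hE10F01, neg_zero]

theorem lie_F01_E01 : ⁅g.F01, g.E01⁆ = -g.H01 := by rw [← lie_skew, g.hE01F01]

theorem lie_F01_E11 : ⁅g.F01, g.E11⁆ = -g.E10 := by
  rw [E11, leibniz_lie, lie_F01_E10, lie_F01_E01, lie_neg, g.hasRoot_E10.lie_H01_right, zero_lie]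
  module

theorem lie_F01_E21 : ⁅g.F01, g.E21⁆ = 0 := by
  rw [E21, lie_smul, leibniz_lie, lie_F01_E11, lie_F01_E10, neg_lie, lie_self]; simp

theorem lie_F01_E31 : ⁅g.F01, g.E31⁆ = 0 := by
  rw [E31, lie_smul, leibniz_lie, lie_F01_E21, lie_F01_E10]; simp

theorem lie_F01_E32 : ⁅g.F01, g.E32⁆ = -g.E31 := by
  rw [E32, leibniz_lie, lie_F01_E31, lie_F01_E01, lie_neg, g.hasRoot_E31.lie_H01_right, zero_lie]
  module

theorem lie_F11_left (x : L) : ⁅g.F11, x⁆ = ⁅g.F01, ⁅g.F10, x⁆⁆ - ⁅g.F10, ⁅g.F01, x⁆⁆ := by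
  rw [F11, lie_lie]

theorem lie_F11_E10 : ⁅g.F11, g.E10⁆ = (3 : ℂ) • g.F01 := by
  rw [lie_F11_left, lie_F10_E10, lie_F01_E10, lie_neg, lie_zero, g.hasRoot_F01.lie_H10_right]
  module

theorem lie_F11_E01 : ⁅g.F11, g.E01⁆ = -g.F10 := by
  rw [lie_F11_left, lie_F10_E01, lie_F01_E01, lie_neg, lie_zero, g.hasRoot_F10.lie_H01_right]
  module

theorem lie_F11_E11 : ⁅g.F11, g.E11⁆ = -g.H11 := by
  rw [lie_F11_left, lie_F10_E11, lie_F01_E11, lie_neg, lie_smul, lie_F01_E01, lie_F10_E10, H11]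
  module

theorem lie_F11_E21 : ⁅g.F11, g.E21⁆ = (2 : ℂ) • g.E10 := by
  rw [lie_F11_left, lie_F10_E21, lie_F01_E21, lie_zero, lie_smul, lie_F01_E11]; module

theorem lie_F11_E31 : ⁅g.F11, g.E31⁆ = 0 := by
  rw [lie_F11_left, lie_F10_E31, lie_F01_E31, lie_zero, lie_neg, lie_F01_E21]; simp

theorem lie_F11_E32 : ⁅g.F11, g.E32⁆ = -g.E21 := by
  rw [lie_F11_left, lie_F10_E32, lie_F01_E32, lie_zero, lie_neg, lie_F10_E31]; simp

theorem lie_F11_F31 : ⁅g.F11, g.F31⁆ = 0 := by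
  rw [lie_F11_left, lie_F10_F31, ← F32, lie_F10_F32, lie_zero, sub_zero]

theorem lie_F11_F32 : ⁅g.F11, g.F32⁆ = 0 := by
  rw [lie_F11_left, lie_F10_F32, lie_F01_F32, lie_zero, lie_zero, sub_zero]

theorem lie_F21_left (x : L) :
    ⁅g.F21, x⁆ = (2 : ℂ)⁻¹ • (⁅g.F10, ⁅g.F11, x⁆⁆ - ⁅g.F11, ⁅g.F10, x⁆⁆) := by
  rw [F21, smul_lie, lie_lie]

theorem lie_F21_E10 : ⁅g.F21, g.E10⁆ = (-2 : ℂ) • g.F11 := by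
  rw [lie_F21_left, lie_F11_E10, lie_F10_E10, lie_neg, lie_smul, lie_F10_F01,
    g.hasRoot_F11.lie_H10_right]
  module

theorem lie_F21_E01 : ⁅g.F21, g.E01⁆ = 0 := by
  rw [lie_F21_left, lie_F11_E01, lie_F10_E01, lie_zero, lie_neg, lie_self]; simp

theorem lie_F21_E11 : ⁅g.F21, g.E11⁆ = (2 : ℂ) • g.F10 := by
  rw [lie_F21_left, lie_F11_E11, lie_F10_E11, H11, lie_neg, lie_add, lie_smul, lie_smul,
    g.hasRoot_F10.lie_H10_right, g.hasRoot_F10.lie_H01_right, lie_F11_E01]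
  module

theorem lie_F21_E21 : ⁅g.F21, g.E21⁆ = -g.H21 := by
  rw [lie_F21_left, lie_F11_E21, lie_F10_E21, H21, lie_smul, lie_smul, lie_F10_E10, lie_F11_E11,
    H11]
  module

theorem lie_F21_E31 : ⁅g.F21, g.E31⁆ = g.E10 := by
  rw [lie_F21_left, lie_F11_E31, lie_F10_E31, lie_neg, lie_zero, lie_F11_E21]; module

theorem lie_F21_E32 : ⁅g.F21, g.E32⁆ = g.E11 := by
  rw [lie_F21_left, lie_F11_E32, lie_F10_E32, lie_neg, lie_zero, lie_F10_E21]; module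

theorem lie_F21_H01 : ⁅g.F21, g.H01⁆ = 0 := by
  rw [g.hasRoot_F21.lie_H01_right]; module

theorem lie_F21_F10 : ⁅g.F21, g.F10⁆ = (-3 : ℂ) • g.F31 := by
  rw [← lie_skew, lie_F10_F21]; module

theorem lie_F21_F01 : ⁅g.F21, g.F01⁆ = 0 := by rw [← lie_skew, lie_F01_F21, neg_zero]

theorem lie_F21_F11 : ⁅g.F21, g.F11⁆ = (-3 : ℂ) • g.F32 := by
  rw [← lie_skew, lie_F11_F21]; module

theorem lie_F21_F31 : ⁅g.F21, g.F31⁆ = 0 := by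
  rw [lie_F21_left, lie_F11_F31, lie_F10_F31, lie_zero, lie_zero]; simp

theorem lie_F21_F32 : ⁅g.F21, g.F32⁆ = 0 := by
  rw [lie_F21_left, lie_F11_F32, lie_F10_F32, lie_zero, lie_zero]; simp

theorem lie_F31_left (x : L) :
    ⁅g.F31, x⁆ = (3 : ℂ)⁻¹ • (⁅g.F10, ⁅g.F21, x⁆⁆ - ⁅g.F21, ⁅g.F10, x⁆⁆) := by
  rw [F31, smul_lie, lie_lie]

theorem lie_F31_E10 : ⁅g.F31, g.E10⁆ = -g.F21 := by
  rw [lie_F31_left, lie_F21_E10, lie_F10_E10, lie_smul, lie_neg, lie_F10_F11,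
    g.hasRoot_F21.lie_H10_right]
  module

theorem lie_F31_E01 : ⁅g.F31, g.E01⁆ = 0 := by
  rw [lie_F31_left, lie_F21_E01, lie_F10_E01, lie_zero, lie_zero]; simp

theorem lie_F31_E11 : ⁅g.F31, g.E11⁆ = 0 := by
  rw [lie_F31_left, lie_F21_E11, lie_F10_E11, lie_smul, lie_smul, lie_self, lie_F21_E01]; simp

theorem lie_F31_E21 : ⁅g.F31, g.E21⁆ = g.F10 := by
  rw [lie_F31_left, lie_F21_E21, lie_F10_E21, lie_smul, lie_neg, H21, lie_add, lie_smul, lie_smul,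
    g.hasRoot_F10.lie_H10_right, g.hasRoot_F10.lie_H01_right, lie_F21_E11]
  module

theorem lie_F31_E31 : ⁅g.F31, g.E31⁆ = -g.H31 := by
  rw [lie_F31_left, lie_F21_E31, lie_F10_E31, lie_neg, lie_F10_E10, lie_F21_E21, H21, H31]; module

theorem lie_F31_E32 : ⁅g.F31, g.E32⁆ = g.E01 := by
  rw [lie_F31_left, lie_F21_E32, lie_F10_E32, lie_zero, lie_F10_E11]; module

theorem lie_F31_H01 : ⁅g.F31, g.H01⁆ = -g.F31 := by
  rw [g.hasRoot_F31.lie_H01_right]; module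

theorem lie_F31_F10 : ⁅g.F31, g.F10⁆ = 0 := by rw [← lie_skew, lie_F10_F31, neg_zero]

theorem lie_F31_F01 : ⁅g.F31, g.F01⁆ = -g.F32 := by rw [F32, lie_skew]

theorem lie_F31_F21 : ⁅g.F31, g.F21⁆ = 0 := by rw [← lie_skew, lie_F21_F31, neg_zero]

theorem lie_F31_F32 : ⁅g.F31, g.F32⁆ = 0 := by
  rw [lie_F31_left, lie_F21_F32, lie_F10_F32, lie_zero, lie_zero]; simp

theorem lie_F32_left (x : L) : ⁅g.F32, x⁆ = ⁅g.F01, ⁅g.F31, x⁆⁆ - ⁅g.F31, ⁅g.F01, x⁆⁆ := by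
  rw [F32, lie_lie]

theorem lie_F32_E10 : ⁅g.F32, g.E10⁆ = 0 := by
  rw [lie_F32_left, lie_F31_E10, lie_F01_E10, lie_zero, lie_neg, lie_F01_F21]; simp

theorem lie_F32_E01 : ⁅g.F32, g.E01⁆ = -g.F31 := by
  rw [lie_F32_left, lie_F31_E01, lie_F01_E01, lie_zero, lie_neg, lie_F31_H01]; simp

theorem lie_F32_E11 : ⁅g.F32, g.E11⁆ = -g.F21 := by
  rw [lie_F32_left, lie_F31_E11, lie_F01_E11, lie_zero, lie_neg, lie_F31_E10]; simp

theorem lie_F32_E21 : ⁅g.F32, g.E21⁆ = g.F11 := by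
  rw [lie_F32_left, lie_F31_E21, lie_F01_E21, lie_zero, ← F11, sub_zero]

theorem lie_F32_E31 : ⁅g.F32, g.E31⁆ = g.F01 := by
  rw [lie_F32_left, lie_F31_E31, lie_F01_E31, lie_zero, lie_neg, H31, lie_add,
    g.hasRoot_F01.lie_H10_right, g.hasRoot_F01.lie_H01_right]
  module

theorem lie_F32_E32 : ⁅g.F32, g.E32⁆ = -g.H32 := by
  rw [lie_F32_left, lie_F31_E32, lie_F01_E32, lie_neg, lie_F01_E01, lie_F31_E31, H31, H32]; module

theorem lie_F32_H01 : ⁅g.F32, g.H01⁆ = g.F32 := by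
  rw [g.hasRoot_F32.lie_H01_right]; module

theorem lie_F32_F01 : ⁅g.F32, g.F01⁆ = 0 := by rw [← lie_skew, lie_F01_F32, neg_zero]

theorem lie_F32_F11 : ⁅g.F32, g.F11⁆ = 0 := by rw [← lie_skew, lie_F11_F32, neg_zero]

theorem lie_F32_F21 : ⁅g.F32, g.F21⁆ = 0 := by rw [← lie_skew, lie_F21_F32, neg_zero]

theorem lie_F32_F31 : ⁅g.F32, g.F31⁆ = 0 := by rw [← lie_skew, lie_F31_F32, neg_zero]

end Brackets

section Tops

theorem hasTop_F21_aU : HasTop (adEnd g.F21) 2 g.aU (ιU (-g.F21)) := by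
  refine hasTop_adEnd_ιU ?_ (by simp)
  change ⁅g.F21, ⁅g.F21, g.E21⁆⁆ = (2 : ℕ) • -g.F21
  rw [lie_F21_E21, lie_neg, ← lie_skew, g.hasRoot_F21.lie_H21]
  module

theorem hasTop_F21_E31 : HasTop (adEnd g.F21) 3 (ιU g.E31) (ιU g.F32) := by
  refine hasTop_adEnd_ιU ?_ g.lie_F21_F32
  change ⁅g.F21, ⁅g.F21, ⁅g.F21, g.E31⁆⁆⁆ = (6 : ℕ) • g.F32
  rw [lie_F21_E31, lie_F21_E10, lie_smul, lie_F21_F11]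
  module

theorem hasTop_F21_E32 : HasTop (adEnd g.F21) 3 (ιU g.E32) (ιU (-g.F31)) := by
  refine hasTop_adEnd_ιU ?_ (by rw [lie_neg, lie_F21_F31, neg_zero])
  change ⁅g.F21, ⁅g.F21, ⁅g.F21, g.E32⁆⁆⁆ = (6 : ℕ) • -g.F31
  rw [lie_F21_E32, lie_F21_E11, lie_smul, lie_F21_F10]
  module

theorem hasTop_F21_E11 : HasTop (adEnd g.F21) 2 (ιU g.E11) (ιU ((-3 : ℂ) • g.F31)) := by
  refine hasTop_adEnd_ιU ?_ (by rw [lie_smul, lie_F21_F31, smul_zero])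
  change ⁅g.F21, ⁅g.F21, g.E11⁆⁆ = (2 : ℕ) • (-3 : ℂ) • g.F31
  rw [lie_F21_E11, lie_smul, lie_F21_F10]
  module

theorem hasTop_F21_E10 : HasTop (adEnd g.F21) 2 (ιU g.E10) (ιU ((3 : ℂ) • g.F32)) := by
  refine hasTop_adEnd_ιU ?_ (by rw [lie_smul, lie_F21_F32, smul_zero])
  change ⁅g.F21, ⁅g.F21, g.E10⁆⁆ = (2 : ℕ) • (3 : ℂ) • g.F32
  rw [lie_F21_E10, lie_smul, lie_F21_F11]
  module

theorem pow_five_adEnd_F21_bU : (adEnd g.F21 ^ 5) g.bU = 0 := by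
  have hD := isDerivation_adEnd g.F21
  have hb := (g.hasTop_F21_E31.mul hD g.hasTop_F21_E11).sub
    (g.hasTop_F21_E32.mul hD g.hasTop_F21_E10)
  have hcomm : ιU g.F31 * ιU g.F32 = ιU g.F32 * ιU g.F31 := by
    rw [← sub_eq_zero, ← ιU_lie, lie_F31_F32, ιU_zero]
  have hcancel :
      ιU g.F32 * ιU ((-3 : ℂ) • g.F31) - ιU (-g.F31) * ιU ((3 : ℂ) • g.F32) = 0 := by
    simp only [ιU_smul, ιU_neg, mul_smul_comm, neg_mul, hcomm]
    module
  rw [hcancel] at hb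
  exact hb.pow_apply_eq_zero

theorem pow_seven_adEnd_F21_cU : (adEnd g.F21 ^ 7) g.cU = 0 := by
  have hD := isDerivation_adEnd g.F21
  have of_lie {x : L} (h : ⁅g.F21, x⁆ = 0) : HasTop (adEnd g.F21) 0 (ιU x) (ιU x) :=
    .of_apply_eq_zero (by rw [adEnd_ιU, h, ιU_zero])
  have hE01 := (g.hasTop_F21_E31.mul hD g.hasTop_F21_E31).mul hD (of_lie g.lie_F21_E01)
  have hH01 := (g.hasTop_F21_E32.mul hD g.hasTop_F21_E31).mul hD (of_lie g.lie_F21_H01)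
  have hF01 := (g.hasTop_F21_E32.mul hD g.hasTop_F21_E32).mul hD (of_lie g.lie_F21_F01)
  exact ((hE01.sub hH01).sub hF01).pow_succ_apply

theorem hasTop_F31_aU : HasTop (adEnd g.F31) 1 g.aU (ιU g.F10) :=
  hasTop_adEnd_ιU (by simpa using g.lie_F31_E21) g.lie_F31_F10

theorem hasTop_F31_E31 : HasTop (adEnd g.F31) 2 (ιU g.E31) (ιU (-g.F31)) := by
  refine hasTop_adEnd_ιU ?_ (by simp)
  change ⁅g.F31, ⁅g.F31, g.E31⁆⁆ = (2 : ℕ) • -g.F31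
  rw [lie_F31_E31, H31, lie_neg, lie_add, g.hasRoot_F31.lie_H10_right, lie_F31_H01]
  module

theorem hasTop_F31_E32 : HasTop (adEnd g.F31) 1 (ιU g.E32) (ιU g.E01) :=
  hasTop_adEnd_ιU (by simpa using g.lie_F31_E32) g.lie_F31_E01

theorem hasTop_F31_E10 : HasTop (adEnd g.F31) 1 (ιU g.E10) (ιU (-g.F21)) :=
  hasTop_adEnd_ιU (by simpa using g.lie_F31_E10) (by rw [lie_neg, lie_F31_F21, neg_zero])

theorem hasTop_F31_E11 : HasTop (adEnd g.F31) 0 (ιU g.E11) (ιU g.E11) :=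
  hasTop_adEnd_ιU (by simp) g.lie_F31_E11

theorem hasTop_F31_E01 : HasTop (adEnd g.F31) 0 (ιU g.E01) (ιU g.E01) :=
  hasTop_adEnd_ιU (by simp) g.lie_F31_E01

theorem hasTop_F31_H01 : HasTop (adEnd g.F31) 1 (ιU g.H01) (ιU (-g.F31)) :=
  hasTop_adEnd_ιU (by simpa using g.lie_F31_H01) (by simp)

theorem hasTop_F31_F01 : HasTop (adEnd g.F31) 1 (ιU g.F01) (ιU (-g.F32)) :=
  hasTop_adEnd_ιU (by simpa using g.lie_F31_F01) (by rw [lie_neg, lie_F31_F32, neg_zero])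

theorem pow_three_adEnd_F31_bU : (adEnd g.F31 ^ 3) g.bU = 0 := by
  have hD := isDerivation_adEnd g.F31
  have hE32 := g.hasTop_F31_E32.mul hD g.hasTop_F31_E10
  exact ((g.hasTop_F31_E31.mul hD g.hasTop_F31_E11).sub hE32).pow_succ_apply

theorem pow_four_adEnd_F31_cU : (adEnd g.F31 ^ 4) g.cU = 0 := by
  have hD := isDerivation_adEnd g.F31
  have hE01 := (g.hasTop_F31_E31.mul hD g.hasTop_F31_E31).mul hD g.hasTop_F31_E01
  have hH01 := (g.hasTop_F31_E32.mul hD g.hasTop_F31_E31).mul hD g.hasTop_F31_H01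
  have hF01 := ((g.hasTop_F31_E32.mul hD g.hasTop_F31_E32).mul hD g.hasTop_F31_F01).succ
  have hc := (hE01.sub hH01).sub hF01
  have hcomm : ιU g.F31 * ιU g.E01 = ιU g.E01 * ιU g.F31 := by
    rw [← sub_eq_zero, ← ιU_lie, lie_F31_E01, ιU_zero]
  have hcancel : ιU (-g.F31) * ιU (-g.F31) * ιU g.E01
      - ιU g.E01 * ιU (-g.F31) * ιU (-g.F31) - 0 = 0 := by
    simp only [ιU_neg, neg_mul, mul_neg, neg_neg, sub_zero]
    rw [mul_assoc, hcomm, ← mul_assoc, hcomm, sub_self]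
  rw [hcancel] at hc
  exact hc.pow_apply_eq_zero

theorem hasTop_F32_aU : HasTop (adEnd g.F32) 1 g.aU (ιU g.F11) :=
  hasTop_adEnd_ιU (by simpa using g.lie_F32_E21) g.lie_F32_F11

theorem hasTop_F32_E31 : HasTop (adEnd g.F32) 1 (ιU g.E31) (ιU g.F01) :=
  hasTop_adEnd_ιU (by simpa using g.lie_F32_E31) g.lie_F32_F01

theorem hasTop_F32_E32 : HasTop (adEnd g.F32) 2 (ιU g.E32) (ιU (-g.F32)) := by
  refine hasTop_adEnd_ιU ?_ (by simp)
  change ⁅g.F32, ⁅g.F32, g.E32⁆⁆ = (2 : ℕ) • -g.F32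
  rw [lie_F32_E32, H32, lie_neg, lie_add, lie_smul, g.hasRoot_F32.lie_H10_right, lie_F32_H01]
  module

theorem hasTop_F32_E11 : HasTop (adEnd g.F32) 1 (ιU g.E11) (ιU (-g.F21)) :=
  hasTop_adEnd_ιU (by simpa using g.lie_F32_E11) (by rw [lie_neg, lie_F32_F21, neg_zero])

theorem hasTop_F32_E10 : HasTop (adEnd g.F32) 0 (ιU g.E10) (ιU g.E10) :=
  hasTop_adEnd_ιU (by simp) g.lie_F32_E10

theorem hasTop_F32_E01 : HasTop (adEnd g.F32) 1 (ιU g.E01) (ιU (-g.F31)) :=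
  hasTop_adEnd_ιU (by simpa using g.lie_F32_E01) (by rw [lie_neg, lie_F32_F31, neg_zero])

theorem hasTop_F32_H01 : HasTop (adEnd g.F32) 1 (ιU g.H01) (ιU g.F32) :=
  hasTop_adEnd_ιU (by simpa using g.lie_F32_H01) (lie_self _)

theorem hasTop_F32_F01 : HasTop (adEnd g.F32) 0 (ιU g.F01) (ιU g.F01) :=
  hasTop_adEnd_ιU (by simp) g.lie_F32_F01

theorem pow_three_adEnd_F32_bU : (adEnd g.F32 ^ 3) g.bU = 0 := by
  have hD := isDerivation_adEnd g.F32
  have hE32 := g.hasTop_F32_E32.mul hD g.hasTop_F32_E10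
  exact ((g.hasTop_F32_E31.mul hD g.hasTop_F32_E11).sub hE32).pow_succ_apply

theorem pow_four_adEnd_F32_cU : (adEnd g.F32 ^ 4) g.cU = 0 := by
  have hD := isDerivation_adEnd g.F32
  have hE01 := ((g.hasTop_F32_E31.mul hD g.hasTop_F32_E31).mul hD g.hasTop_F32_E01).succ
  have hH01 := (g.hasTop_F32_E32.mul hD g.hasTop_F32_E31).mul hD g.hasTop_F32_H01
  have hF01 := (g.hasTop_F32_E32.mul hD g.hasTop_F32_E32).mul hD g.hasTop_F32_F01
  have hc := (hE01.sub hH01).sub hF01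
  have hcomm : ιU g.F01 * ιU g.F32 = ιU g.F32 * ιU g.F01 := by
    rw [← sub_eq_zero, ← ιU_lie, lie_F01_F32, ιU_zero]
  have hcancel : 0 - ιU (-g.F32) * ιU g.F01 * ιU g.F32
      - ιU (-g.F32) * ιU (-g.F32) * ιU g.F01 = 0 := by
    simp only [ιU_neg, neg_mul, mul_neg, neg_neg, zero_sub]
    rw [mul_assoc, hcomm, mul_assoc, sub_self]
  rw [hcancel] at hc
  exact hc.pow_apply_eq_zero

end Tops

section TriangularDecomposition

/-- The left ideal `U(𝔤)𝔫₊`. -/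
noncomputable def nIdeal : Ideal (UniversalEnvelopingAlgebra ℂ L) :=
  Ideal.span {ιU g.E10, ιU g.E01}

/-- The subalgebra `U(𝔟₋)` of `U(𝔤)`. -/
noncomputable def lowerBorel : Subalgebra ℂ (UniversalEnvelopingAlgebra ℂ L) :=
  Algebra.adjoin ℂ {ιU g.F10, ιU g.F01, ιU g.H10, ιU g.H01}

variable {g}

theorem eqModN_iff_sub_mem {u v : UniversalEnvelopingAlgebra ℂ L} :
    g.EqModN u v ↔ u - v ∈ g.nIdeal := by
  rw [nIdeal, Ideal.mem_span_pair]
  exact exists₂_congr fun _ _ => eq_comm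

theorem ιU_lie_mem_nIdeal {x y : L} (hx : ιU x ∈ g.nIdeal) (hy : ιU y ∈ g.nIdeal) :
    ιU ⁅x, y⁆ ∈ g.nIdeal := by
  rw [ιU_lie]
  exact sub_mem (Ideal.mul_mem_left _ _ hy) (Ideal.mul_mem_left _ _ hx)

variable (g)

theorem ιU_E10_mem_nIdeal : ιU g.E10 ∈ g.nIdeal := Ideal.subset_span (by simp)

theorem ιU_E01_mem_nIdeal : ιU g.E01 ∈ g.nIdeal := Ideal.subset_span (by simp)

theorem ιU_E11_mem_nIdeal : ιU g.E11 ∈ g.nIdeal :=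
  ιU_lie_mem_nIdeal g.ιU_E10_mem_nIdeal g.ιU_E01_mem_nIdeal

theorem ιU_E21_mem_nIdeal : ιU g.E21 ∈ g.nIdeal := by
  rw [E21, ιU_smul]
  exact Submodule.smul_of_tower_mem _ _
    (ιU_lie_mem_nIdeal g.ιU_E11_mem_nIdeal g.ιU_E10_mem_nIdeal)

theorem exists_mul_eq_add_mul_lowerBorel :
    ∀ e ∈ ({ιU g.E10, ιU g.E01} : Set (UniversalEnvelopingAlgebra ℂ L)),
      ∀ s ∈ ({ιU g.F10, ιU g.F01, ιU g.H10, ιU g.H01} : Set (UniversalEnvelopingAlgebra ℂ L)),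
        ∃ b ∈ g.lowerBorel, ∃ b' ∈ g.lowerBorel, e * s = b + b' * e := by
  have hF10 : ιU g.F10 ∈ g.lowerBorel := Algebra.subset_adjoin (by simp)
  have hF01 : ιU g.F01 ∈ g.lowerBorel := Algebra.subset_adjoin (by simp)
  have hH10 : ιU g.H10 ∈ g.lowerBorel := Algebra.subset_adjoin (by simp)
  have hH01 : ιU g.H01 ∈ g.lowerBorel := Algebra.subset_adjoin (by simp)
  have exchange {e s : L} (hs : ιU s ∈ g.lowerBorel) (hes : ιU ⁅e, s⁆ ∈ g.lowerBorel) :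
      ∃ b ∈ g.lowerBorel, ∃ b' ∈ g.lowerBorel, ιU e * ιU s = b + b' * ιU e :=
    ⟨_, hes, _, hs, by rw [ιU_lie, sub_add_cancel]⟩
  have exchange_weight {e h : L} (c : ℂ) (hh : ιU h ∈ g.lowerBorel) (hhe : ⁅h, e⁆ = c • e) :
      ∃ b ∈ g.lowerBorel, ∃ b' ∈ g.lowerBorel, ιU e * ιU h = b + b' * ιU e := by
    refine ⟨0, zero_mem _, ιU h - c • 1, sub_mem hh (Subalgebra.smul_mem _ (one_mem _) c), ?_⟩
    rw [sub_mul, smul_one_mul, ← ιU_smul, ← hhe, ιU_lie]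
    abel
  rintro _ (rfl | rfl) _ (rfl | rfl | rfl | rfl)
  · exact exchange hF10 (by rwa [g.hE10F10])
  · exact exchange hF01 (by rw [g.hE10F01, ιU_zero]; exact zero_mem _)
  · exact exchange_weight _ hH10 g.hH10E10
  · exact exchange_weight _ hH01 g.hH01E10
  · exact exchange hF10 (by rw [g.hE01F10, ιU_zero]; exact zero_mem _)
  · exact exchange hF01 (by rwa [g.hE01F01])
  · exact exchange_weight _ hH10 g.hH10E01
  · exact exchange_weight _ hH01 g.hH01E01

theorem lowerBorel_sup_nIdeal_eq_top :
    Subalgebra.toSubmodule g.lowerBorel ⊔ g.nIdeal.restrictScalars ℂ = ⊤ := by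
  refine adjoin_sup_span_eq_top ?_ g.exists_mul_eq_add_mul_lowerBorel
  rw [← adjoin_image_ιU_eq_top g.generates]
  congr 1
  simp only [Set.image_insert_eq, Set.image_singleton]
  grind

theorem lowerBorel_le_iSup_eigenspace :
    Subalgebra.toSubmodule g.lowerBorel ≤
      ⨆ μ ∈ AddSubmonoid.multiples (-1 : ℂ), eigenspace (adEnd g.ht) μ := by
  refine (isDerivation_adEnd g.ht).adjoin_le_iSup_eigenspace ?_
  have hneg : (-1 : ℂ) ∈ AddSubmonoid.multiples (-1 : ℂ) := AddSubmonoid.mem_multiples _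
  have hzero : (0 : ℂ) ∈ AddSubmonoid.multiples (-1 : ℂ) := zero_mem _
  rintro _ (rfl | rfl | rfl | rfl)
  · exact ⟨_, hneg, ιU_mem_eigenspace (by simpa using g.hasRoot_F10.lie_ht)⟩
  · exact ⟨_, hneg, ιU_mem_eigenspace (by simpa using g.hasRoot_F01.lie_ht)⟩
  · exact ⟨_, hzero, ιU_mem_eigenspace (by simpa using g.hasRoot_H10.lie_ht)⟩
  · exact ⟨_, hzero, ιU_mem_eigenspace (by simpa using g.hasRoot_H01.lie_ht)⟩

theorem nIdeal_le_comap_adEnd_ht :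
    g.nIdeal.restrictScalars ℂ ≤ (g.nIdeal.restrictScalars ℂ).comap (adEnd g.ht) := by
  refine (isDerivation_adEnd g.ht).span_le_comap ?_
  rintro _ (rfl | rfl)
  · rw [adEnd_ιU, g.hasRoot_E10.lie_ht, ιU_smul]
    exact Submodule.smul_of_tower_mem _ _ g.ιU_E10_mem_nIdeal
  · rw [adEnd_ιU, g.hasRoot_E01.lie_ht, ιU_smul]
    exact Submodule.smul_of_tower_mem _ _ g.ιU_E01_mem_nIdeal

theorem mem_nIdeal_of_mem_eigenspace {k : ℕ} (hk : 0 < k) {u : UniversalEnvelopingAlgebra ℂ L}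
    (hu : u ∈ eigenspace (adEnd g.ht) (k : ℂ)) : u ∈ g.nIdeal := by
  have hmultiples : (k : ℂ) ∉ (AddSubmonoid.multiples (-1 : ℂ) : Set ℂ) := by
    rintro ⟨i, hi⟩
    have hik : ((i + k : ℕ) : ℂ) = 0 := by rw [Nat.cast_add, ← hi]; simp
    have := Nat.cast_eq_zero.1 hik
    omega
  refine mem_of_mem_eigenspace_of_mem_iSup_sup g.nIdeal_le_comap_adEnd_ht hmultiples hu ?_
  exact sup_le_sup_right g.lowerBorel_le_iSup_eigenspace _
    (g.lowerBorel_sup_nIdeal_eq_top ▸ Submodule.mem_top)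

end TriangularDecomposition

section Congruences

theorem bU_mem_eigenspace : g.bU ∈ eigenspace (adEnd g.ht) (6 : ℂ) := by
  have hD := isDerivation_adEnd g.ht
  have hE31 := ιU_mem_eigenspace g.hasRoot_E31.lie_ht
  have hE11 := ιU_mem_eigenspace g.hasRoot_E11.lie_ht
  have hE32 := ιU_mem_eigenspace g.hasRoot_E32.lie_ht
  have hE10 := ιU_mem_eigenspace g.hasRoot_E10.lie_ht
  refine sub_mem ?_ ?_
  · convert hD.mul_mem_eigenspace hE31 hE11 using 2; norm_num
  · convert hD.mul_mem_eigenspace hE32 hE10 using 2; norm_num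

theorem cU_mem_eigenspace : g.cU ∈ eigenspace (adEnd g.ht) (9 : ℂ) := by
  have hD := isDerivation_adEnd g.ht
  have hE31 := ιU_mem_eigenspace g.hasRoot_E31.lie_ht
  have hE32 := ιU_mem_eigenspace g.hasRoot_E32.lie_ht
  have hE01 := ιU_mem_eigenspace g.hasRoot_E01.lie_ht
  have hH01 := ιU_mem_eigenspace g.hasRoot_H01.lie_ht
  have hF01 := ιU_mem_eigenspace g.hasRoot_F01.lie_ht
  refine sub_mem (sub_mem ?_ ?_) ?_
  · convert hD.mul_mem_eigenspace (hD.mul_mem_eigenspace hE31 hE31) hE01 using 2; norm_num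
  · convert hD.mul_mem_eigenspace (hD.mul_mem_eigenspace hE32 hE31) hH01 using 2; norm_num
  · convert hD.mul_mem_eigenspace (hD.mul_mem_eigenspace hE32 hE32) hF01 using 2; norm_num

theorem bU_pow_mul_cU_pow_mem_eigenspace (s t : ℕ) :
    g.bU ^ s * g.cU ^ t ∈ eigenspace (adEnd g.ht) (3 * (2 * s + 3 * t : ℕ) : ℂ) := by
  have hD := isDerivation_adEnd g.ht
  convert hD.mul_mem_eigenspace (hD.pow_mem_eigenspace g.bU_mem_eigenspace s)
    (hD.pow_mem_eigenspace g.cU_mem_eigenspace t) using 2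
  push_cast
  ring

variable {g} {e f h φ : L} {p k : ℕ} {l : ℂ} {q : ℚ}

theorem adEnd_pow_succ_bU_pow_mul_cU_pow (hb : (adEnd φ ^ (2 * p + 1)) g.bU = 0)
    (hc : (adEnd φ ^ (3 * p + 1)) g.cU = 0) (s t : ℕ) :
    (adEnd φ ^ (p * (2 * s + 3 * t) + 1)) (g.bU ^ s * g.cU ^ t) = 0 := by
  have hD := isDerivation_adEnd φ
  convert hD.pow_add_succ_apply_mul (hD.pow_mul_succ_apply_pow hb s)
    (hD.pow_mul_succ_apply_pow hc t) using 3
  ring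

theorem adEnd_pow_succ_adEnd_pow_mem_nIdeal (hk : 0 < k) (he : ⁅g.ht, e⁆ = (k : ℂ) • e)
    (hφ : ⁅g.ht, φ⁆ = l • φ) (hkl : (k + p * l + 3 : ℂ) = 0) (s t : ℕ) :
    (adEnd e ^ (2 * s + 3 * t + 1)) ((adEnd φ ^ (p * (2 * s + 3 * t))) (g.bU ^ s * g.cU ^ t)) ∈
      g.nIdeal := by
  refine g.mem_nIdeal_of_mem_eigenspace hk ?_
  convert adEnd_pow_mem_eigenspace he (adEnd_pow_mem_eigenspace hφ
    (g.bU_pow_mul_cU_pow_mem_eigenspace s t) (p * (2 * s + 3 * t))) (2 * s + 3 * t + 1) using 2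
  push_cast
  linear_combination -(2 * s + 3 * t : ℂ) * hkl

/-- The constant of the strip-off congruences, for a lowering operator `φ` whose divided power
`(ad φ) ^ p / p!` maps `a` to `q • f`. -/
def stripConst (p : ℕ) (q : ℚ) (n r : ℕ) : ℚ :=
  q ^ r * (p * n).descFactorial (p * r) * n.descFactorial r

theorem stripConst_ne_zero (hq : q ≠ 0) {n r : ℕ} (hrn : r ≤ n) : stripConst p q n r ≠ 0 := by
  have hpr : p * r ≤ p * n := Nat.mul_le_mul_left p hrn
  simp [stripConst, hq, Nat.descFactorial_eq_zero_iff_lt, hrn, hpr]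

theorem eqModN_strip_aU_pow (hef : ⁅e, f⁆ = h) (hhe : ⁅h, e⁆ = (2 : ℂ) • e)
    (he : ιU e ∈ g.nIdeal) (ha : HasTop (adEnd φ) p g.aU (ιU ((q : ℂ) • f)))
    (hb : (adEnd φ ^ (2 * p + 1)) g.bU = 0) (hc : (adEnd φ ^ (3 * p + 1)) g.cU = 0)
    (hk : 0 < k) (hte : ⁅g.ht, e⁆ = (k : ℂ) • e) (htφ : ⁅g.ht, φ⁆ = l • φ)
    (hkl : (k + p * l + 3 : ℂ) = 0) {n r s t : ℕ} (hn : n = r + 2 * s + 3 * t) :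
    g.EqModN ((adU e)^[n] ((adU φ)^[p * n] (g.aU ^ r * g.bU ^ s * g.cU ^ t)))
      ((stripConst p q n r : ℂ) •
        (((List.range r).map fun j : ℕ => ιU h - ((n : ℂ) - ((j : ℂ) + 1)) • 1).prod
          * (adU e)^[n - r] ((adU φ)^[p * (n - r)] (g.bU ^ s * g.cU ^ t)))) := by
  obtain ⟨m, hm⟩ : ∃ m, m = 2 * s + 3 * t := ⟨_, rfl⟩
  obtain rfl : n = r + m := by omega
  have hprod : ((List.range r).map fun j : ℕ =>
      ιU h - (((r + m : ℕ) : ℂ) - ((j : ℂ) + 1)) • 1).prod =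
        aeval (ιU h - (r + m : ℕ) + 1) (ascPochhammer ℕ r) := by
    rw [aeval_ascPochhammer_eq_prod_range]
    congr 2 with j
    simp only [sub_smul, add_smul, one_smul, Nat.cast_smul_eq_nsmul, nsmul_one]
    push_cast
    abel
  have hy := adEnd_pow_succ_bU_pow_mul_cU_pow hb hc s t
  have hey := adEnd_pow_succ_adEnd_pow_mem_nIdeal hk hte htφ hkl s t
  rw [← hm] at hy hey
  rw [eqModN_iff_sub_mem, hprod, Nat.add_sub_cancel_left, mul_assoc]
  simp only [iterate_adU, stripConst]
  push_cast
  simpa only [Nat.cast_add] using adEnd_pow_adEnd_pow_sub_mem hef hhe he ha hy hey r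

end Congruences

end G2Gens

/-- **Lemma A.6 (lem-thirdstep).**  For `n = r + 2s + 3t`, the operators
`(E^n F^{2n})_L` (resp. `(E^n F^n)_L`) strip off the factor `a^r` at the cost of a falling
factorial in the corresponding coroot, modulo `U(𝔤)𝔫₊`; the constants depend only on `n`
and `r`. -/
theorem G2Gens.strip_a_power_congruences
    {L : Type*} [LieRing L] [LieAlgebra ℂ L] (g : G2Gens L) (n r : ℕ) (hrn : r ≤ n) :
    ∃ C₁ C₂ C₃ : ℚ, C₁ ≠ 0 ∧ C₂ ≠ 0 ∧ C₃ ≠ 0 ∧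
      ∀ s t : ℕ, n = r + 2 * s + 3 * t →
        g.EqModN ((adU g.E21)^[n] ((adU g.F21)^[2 * n] (g.aU ^ r * g.bU ^ s * g.cU ^ t)))
          ((C₁ : ℂ) •
            (((List.range r).map
                (fun j : ℕ => ιU g.H21 - ((n : ℂ) - ((j : ℂ) + 1)) • 1)).prod
              * (adU g.E21)^[n - r] ((adU g.F21)^[2 * (n - r)] (g.bU ^ s * g.cU ^ t)))) ∧
        g.EqModN ((adU g.E10)^[n] ((adU g.F31)^[n] (g.aU ^ r * g.bU ^ s * g.cU ^ t)))
          ((C₂ : ℂ) •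
            (((List.range r).map
                (fun j : ℕ => ιU g.H10 - ((n : ℂ) - ((j : ℂ) + 1)) • 1)).prod
              * (adU g.E10)^[n - r] ((adU g.F31)^[n - r] (g.bU ^ s * g.cU ^ t)))) ∧
        g.EqModN ((adU g.E11)^[n] ((adU g.F32)^[n] (g.aU ^ r * g.bU ^ s * g.cU ^ t)))
          ((C₃ : ℂ) •
            (((List.range r).map
                (fun j : ℕ => ιU g.H11 - ((n : ℂ) - ((j : ℂ) + 1)) • 1)).prod
              * (adU g.E11)^[n - r] ((adU g.F32)^[n - r] (g.bU ^ s * g.cU ^ t)))) := by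
  have hE21F21 : ⁅g.E21, g.F21⁆ = g.H21 := by rw [← lie_skew, g.lie_F21_E21, neg_neg]
  have hE11F11 : ⁅g.E11, g.F11⁆ = g.H11 := by rw [← lie_skew, g.lie_F11_E11, neg_neg]
  refine ⟨stripConst 2 (-1) n r, stripConst 1 1 n r, stripConst 1 1 n r,
    stripConst_ne_zero (by norm_num) hrn, stripConst_ne_zero one_ne_zero hrn,
    stripConst_ne_zero one_ne_zero hrn, fun s t hn => ⟨?_, ?_, ?_⟩⟩
  · exact eqModN_strip_aU_pow (p := 2) (k := 3) hE21F21 g.hasRoot_E21.lie_H21 g.ιU_E21_mem_nIdeal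
      (by simpa using g.hasTop_F21_aU) g.pow_five_adEnd_F21_bU g.pow_seven_adEnd_F21_cU
      three_pos (by rw [g.hasRoot_E21.lie_ht]; norm_num) g.hasRoot_F21.lie_ht (by norm_num) hn
  · simpa only [one_mul] using eqModN_strip_aU_pow (p := 1) (k := 1) g.hE10F10 g.hH10E10
      g.ιU_E10_mem_nIdeal (by simpa using g.hasTop_F31_aU) g.pow_three_adEnd_F31_bU
      g.pow_four_adEnd_F31_cU one_pos (by rw [g.hasRoot_E10.lie_ht]; norm_num) g.hasRoot_F31.lie_ht
      (by norm_num) hn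
  · simpa only [one_mul] using eqModN_strip_aU_pow (p := 1) (k := 2) hE11F11
      (by rw [g.hasRoot_E11.lie_H11]; norm_num) g.ιU_E11_mem_nIdeal
      (by simpa using g.hasTop_F32_aU) g.pow_three_adEnd_F32_bU g.pow_four_adEnd_F32_cU
      two_pos (by rw [g.hasRoot_E11.lie_ht]; norm_num) g.hasRoot_F32.lie_ht (by norm_num) hn
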